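/- arXiv:2101.10947 — 2 statements merged into one kernel-verified Lean document; each statement's English description precedes it below -/
import Mathlib

section
/- Let X and Z be integrable real-valued random variables on a probability space (Ω, 𝓕, P), let α ∈ (0,1) and δ ∈ (0, 1−α). Then q_{X+Z}(α) ≤ q_X(α+δ) + q_Z(1−δ). (First inequality of the paper's Value-at-Risk subadditivity lemma, in the unconditional case: VaR_α(−(X+Z)) ≤ VaR_{α+δ}(−X) + VaR_{1−δ}(−Z).) -/
open MeasureTheory

/-- Lower quantile function: `q_X(u) = inf {y : P(X ≤ y) ≥ u}` (the paper's `VaR_u(-X)`,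
unconditional case). -/
noncomputable def lowerQuantile {Ω : Type*} [MeasurableSpace Ω] (P : Measure Ω)
    (X : Ω → ℝ) (u : ℝ) : ℝ :=
  sInf {y : ℝ | u ≤ (P {ω | X ω ≤ y}).toReal}

lemma cdf_map_eq {Ω : Type*} [MeasurableSpace Ω] (P : Measure Ω) [IsProbabilityMeasure P]
    (X : Ω → ℝ) (hX : Measurable X) (y : ℝ) :
    (P {ω | X ω ≤ y}).toReal = ProbabilityTheory.cdf (P.map X) y := by
  have := Measure.isProbabilityMeasure_map (μ := P) hX.aemeasurable
  rw [ProbabilityTheory.cdf_eq_real, Measure.real, Measure.map_apply hX measurableSet_Iic]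
  rfl

lemma quantile_nonempty {Ω : Type*} [MeasurableSpace Ω] (P : Measure Ω) [IsProbabilityMeasure P]
    (X : Ω → ℝ) (hX : Measurable X) (u : ℝ) (hu : u < 1) :
    {y : ℝ | u ≤ (P {ω | X ω ≤ y}).toReal}.Nonempty := by
  obtain ⟨y, hy⟩ :=
    ((ProbabilityTheory.tendsto_cdf_atTop (P.map X)).eventually (eventually_ge_nhds hu)).exists
  exact ⟨y, by rw [Set.mem_ofPred_eq, cdf_map_eq P X hX]; exact hy⟩

lemma quantile_bddBelow {Ω : Type*} [MeasurableSpace Ω] (P : Measure Ω) [IsProbabilityMeasure P]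
    (X : Ω → ℝ) (hX : Measurable X) (u : ℝ) (hu : 0 < u) :
    BddBelow {y : ℝ | u ≤ (P {ω | X ω ≤ y}).toReal} := by
  obtain ⟨b, hb⟩ :=
    ((ProbabilityTheory.tendsto_cdf_atBot (P.map X)).eventually (eventually_lt_nhds hu)).exists
  refine ⟨b, fun y hy => ?_⟩
  rw [Set.mem_ofPred_eq, cdf_map_eq P X hX] at hy
  by_contra! h
  have := ProbabilityTheory.monotone_cdf (P.map X) h.le
  linarith

/-- First inequality of the paper's Value-at-Risk subadditivity lemma, unconditional case:
`VaR_α(-(X+Z)) ≤ VaR_{α+δ}(-X) + VaR_{1-δ}(-Z)`. -/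
theorem var_subadditivity_upper
    {Ω : Type*} [MeasurableSpace Ω] (P : Measure Ω) [IsProbabilityMeasure P]
    (X Z : Ω → ℝ) (hXm : Measurable X) (hZm : Measurable Z)
    (hX : Integrable X P) (hZ : Integrable Z P)
    (α δ : ℝ) (hα : α ∈ Set.Ioo (0 : ℝ) 1) (hδ : δ ∈ Set.Ioo (0 : ℝ) (1 - α)) :
    lowerQuantile P (fun ω => X ω + Z ω) α
      ≤ lowerQuantile P X (α + δ) + lowerQuantile P Z (1 - δ) := by
  obtain ⟨hα0, hα1⟩ := hα
  obtain ⟨hδ0, hδ1⟩ := hδ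
  have key : ∀ x ∈ {y : ℝ | α + δ ≤ (P {ω | X ω ≤ y}).toReal},
      ∀ z ∈ {y : ℝ | 1 - δ ≤ (P {ω | Z ω ≤ y}).toReal},
      lowerQuantile P (fun ω => X ω + Z ω) α ≤ x + z := by
    intro x hx z hz
    refine csInf_le (quantile_bddBelow P _ (hXm.add hZm) α hα0) ?_
    rw [Set.mem_ofPred_eq] at hx hz ⊢
    have hB : MeasurableSet {ω | Z ω ≤ z} := measurableSet_le hZm measurable_const
    have h1 := measureReal_union_add_inter (μ := P) (s := {ω | X ω ≤ x}) hB
    have h2 : P.real ({ω | X ω ≤ x} ∪ {ω | Z ω ≤ z}) ≤ 1 := measureReal_le_one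
    have h3 : P.real ({ω | X ω ≤ x} ∩ {ω | Z ω ≤ z}) ≤ P.real {ω | X ω + Z ω ≤ x + z} :=
      measureReal_mono (fun ω h => by
        have ha : X ω ≤ x := by simpa using h.1
        have hb : Z ω ≤ z := by simpa using h.2
        rw [Set.mem_ofPred_eq]
        exact add_le_add ha hb)
    simp only [Measure.real] at h1 h2 h3
    linarith
  have hZ' : ∀ x ∈ {y : ℝ | α + δ ≤ (P {ω | X ω ≤ y}).toReal},
      lowerQuantile P (fun ω => X ω + Z ω) α - x ≤ lowerQuantile P Z (1 - δ) := fun x hx =>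
    le_csInf (quantile_nonempty P Z hZm _ (by linarith)) fun z hz => by
      linarith [key x hx z hz]
  have hX' : lowerQuantile P (fun ω => X ω + Z ω) α - lowerQuantile P Z (1 - δ)
      ≤ lowerQuantile P X (α + δ) :=
    le_csInf (quantile_nonempty P X hXm _ (by linarith)) fun x hx => by
      linarith [hZ' x hx]
  linarith
end

section
/- Let (Ω, 𝓕, P) be a probability space and let m : (0,1) → ℝ be a nonincreasing, nonnegative function bounded above by a constant m₀ with ∫₀¹ m(u) du = 1. For an integrable real-valued random variable Y define the spectral risk measure ρ_m(Y) := −∫₀¹ q_Y(u)·m(u) du. Assume in addition that ρ_m is subadditive on integrable random variables, i.e. ρ_m(X + Y) ≤ ρ_m(X) + ρ_m(Y) whenever X, Y and X+Y are integrable. Then for all integrable X, Y one has |ρ_m(X) − ρ_m(Y)| ≤ m₀·E[|X − Y|]. (Unconditional case of the Lipschitz part of the paper's Lemma on spectral risk measures, with Lipschitz constant m(0).) -/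
open MeasureTheory

/-- Spectral risk measure with spectrum `m`: `ρ_m(Y) = -∫₀¹ q_Y(u) m(u) du`. -/
noncomputable def spectralRisk {Ω : Type*} [MeasurableSpace Ω] (P : Measure Ω)
    (m : ℝ → ℝ) (Y : Ω → ℝ) : ℝ :=
  -∫ u in Set.Ioo (0 : ℝ) 1, lowerQuantile P Y u * m u

theorem lowerQuantile_le_iff_aux {Ω : Type*} [MeasurableSpace Ω] (P : Measure Ω)
    [IsProbabilityMeasure P] (Z : Ω → ℝ) (hZ : Measurable Z) (u : ℝ)
    (hu : u ∈ Set.Ioo (0 : ℝ) 1) (y : ℝ) :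
    lowerQuantile P Z u ≤ y ↔ u ≤ ProbabilityTheory.cdf (P.map Z) y := by
  have : IsProbabilityMeasure (P.map Z) := Measure.isProbabilityMeasure_map hZ.aemeasurable
  have hF : ∀ y, (P {ω | Z ω ≤ y}).toReal = ProbabilityTheory.cdf (P.map Z) y := by
    intro y
    rw [ProbabilityTheory.cdf_eq_real, Measure.real, Measure.map_apply hZ measurableSet_Iic]
    rfl
  unfold lowerQuantile
  simp only [hF]
  set F := ProbabilityTheory.cdf (P.map Z) with hFdef
  have hne : {y : ℝ | u ≤ F y}.Nonempty := by
    obtain ⟨a, ha⟩ := ((ProbabilityTheory.tendsto_cdf_atTop (P.map Z)).eventually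
      (lt_mem_nhds hu.2)).exists
    exact ⟨a, ha.le⟩
  have hbd : BddBelow {y : ℝ | u ≤ F y} := by
    obtain ⟨a, ha⟩ := ((ProbabilityTheory.tendsto_cdf_atBot (P.map Z)).eventually
      (gt_mem_nhds hu.1)).exists
    refine ⟨a, fun b hb => ?_⟩
    by_contra hlt
    have h1 := F.mono (not_le.mp hlt).le
    have h2 : u ≤ F b := hb
    have h3 : F a < u := ha
    linarith
  constructor
  · intro h
    have hc : Filter.Tendsto F (nhdsWithin y (Set.Ioi y)) (nhds (F y)) :=
      (F.right_continuous y).mono_left (nhdsWithin_mono _ Set.Ioi_subset_Ici_self)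
    refine ge_of_tendsto hc ?_
    filter_upwards [self_mem_nhdsWithin] with z hz
    obtain ⟨s, hs, hsz⟩ := exists_lt_of_csInf_lt hne (lt_of_le_of_lt h hz)
    exact le_trans hs (F.mono hsz.le)
  · intro h
    exact csInf_le hbd h

theorem lowerQuantile_aemeasurable_aux {Ω : Type*} [MeasurableSpace Ω] (P : Measure Ω)
    [IsProbabilityMeasure P] (Z : Ω → ℝ) (hZ : Measurable Z) :
    AEMeasurable (lowerQuantile P Z) (volume.restrict (Set.Ioo (0 : ℝ) 1)) := by
  refine aemeasurable_restrict_of_monotoneOn measurableSet_Ioo ?_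
  intro a ha b hb hab
  rw [lowerQuantile_le_iff_aux P Z hZ a ha]
  exact hab.trans ((lowerQuantile_le_iff_aux P Z hZ b hb _).1 le_rfl)

theorem lowerQuantile_map_aux {Ω : Type*} [MeasurableSpace Ω] (P : Measure Ω)
    [IsProbabilityMeasure P] (Z : Ω → ℝ) (hZ : Measurable Z) :
    (volume.restrict (Set.Ioo (0 : ℝ) 1)).map (lowerQuantile P Z) = P.map Z := by
  have hp : IsProbabilityMeasure (P.map Z) := Measure.isProbabilityMeasure_map hZ.aemeasurable
  have hq := lowerQuantile_aemeasurable_aux P Z hZ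
  have : IsFiniteMeasure (volume.restrict (Set.Ioo (0 : ℝ) 1)) := ⟨by simp⟩
  refine Measure.ext_of_Iic _ _ fun a => ?_
  rw [Measure.map_apply_of_aemeasurable hq measurableSet_Iic]
  have h1 : volume.restrict (Set.Ioo (0 : ℝ) 1) (lowerQuantile P Z ⁻¹' Set.Iic a)
      = volume.restrict (Set.Ioo (0 : ℝ) 1) (Set.Iic (ProbabilityTheory.cdf (P.map Z) a)) := by
    refine measure_congr ?_
    filter_upwards [ae_restrict_mem measurableSet_Ioo] with u hu
    exact propext (lowerQuantile_le_iff_aux P Z hZ u hu a)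
  rw [h1, Measure.restrict_congr_set Ioo_ae_eq_Ioc, Measure.restrict_apply measurableSet_Iic,
    Set.inter_comm, Set.Ioc_inter_Iic, Real.volume_Ioc,
    min_eq_right (ProbabilityTheory.cdf_le_one _ _), sub_zero, ProbabilityTheory.cdf_eq_real,
    ofReal_measureReal]

theorem abs_spectralRisk_le_aux {Ω : Type*} [MeasurableSpace Ω] (P : Measure Ω)
    [IsProbabilityMeasure P] (m : ℝ → ℝ) (m₀ : ℝ)
    (hnonneg : ∀ u ∈ Set.Ioo (0 : ℝ) 1, 0 ≤ m u)
    (hbdd : ∀ u ∈ Set.Ioo (0 : ℝ) 1, m u ≤ m₀)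
    (Z : Ω → ℝ) (hZ : Measurable Z) (hi : Integrable Z P) :
    |spectralRisk P m Z| ≤ m₀ * ∫ ω, |Z ω| ∂P := by
  have hq := lowerQuantile_aemeasurable_aux P Z hZ
  have hmap := lowerQuantile_map_aux P Z hZ
  have habs : ∀ ν : Measure ℝ, AEStronglyMeasurable (fun x : ℝ => |x|) ν :=
    fun ν => continuous_abs.aestronglyMeasurable
  have hE : ∫ u in Set.Ioo (0 : ℝ) 1, |lowerQuantile P Z u| = ∫ ω, |Z ω| ∂P := by
    rw [← integral_map hq (habs _), hmap, integral_map hZ.aemeasurable (habs _)]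
  have hI : Integrable (fun u => |lowerQuantile P Z u|)
      (volume.restrict (Set.Ioo (0 : ℝ) 1)) := by
    refine (integrable_map_measure (habs _) hq).1 ?_
    rw [hmap]
    exact (integrable_map_measure (habs _) hZ.aemeasurable).2 hi.abs
  unfold spectralRisk
  rw [abs_neg, ← hE, ← integral_const_mul]
  refine abs_integral_le_integral_abs.trans ?_
  refine integral_mono_of_nonneg (Filter.Eventually.of_forall fun _ => abs_nonneg _)
    (hI.const_mul m₀) ?_
  filter_upwards [ae_restrict_mem measurableSet_Ioo] with u hu
  rw [abs_mul, abs_of_nonneg (hnonneg u hu), mul_comm]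
  exact mul_le_mul_of_nonneg_right (hbdd u hu) (abs_nonneg _)

/-- Unconditional case of the Lipschitz part of the paper's Lemma on spectral risk
measures: a subadditive spectral risk measure with spectrum bounded by `m₀` is
Lipschitz with constant `m₀`. -/
theorem spectral_risk_lipschitz
    {Ω : Type*} [MeasurableSpace Ω] (P : Measure Ω) [IsProbabilityMeasure P]
    (m : ℝ → ℝ) (m₀ : ℝ)
    (hanti : AntitoneOn m (Set.Ioo (0 : ℝ) 1))
    (hnonneg : ∀ u ∈ Set.Ioo (0 : ℝ) 1, 0 ≤ m u)
    (hbdd : ∀ u ∈ Set.Ioo (0 : ℝ) 1, m u ≤ m₀)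
    (hnorm : ∫ u in Set.Ioo (0 : ℝ) 1, m u = 1)
    (hsub : ∀ X Y : Ω → ℝ, Integrable X P → Integrable Y P →
      Integrable (fun ω => X ω + Y ω) P →
      spectralRisk P m (fun ω => X ω + Y ω) ≤ spectralRisk P m X + spectralRisk P m Y) :
    ∀ X Y : Ω → ℝ, Measurable X → Measurable Y → Integrable X P → Integrable Y P →
      |spectralRisk P m X - spectralRisk P m Y| ≤ m₀ * ∫ ω, |X ω - Y ω| ∂P := by
  have key : ∀ X Y : Ω → ℝ, Measurable X → Measurable Y → Integrable X P → Integrable Y P →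
      spectralRisk P m X - spectralRisk P m Y ≤ m₀ * ∫ ω, |X ω - Y ω| ∂P := by
    intro X Y hX hY hXi hYi
    have e : (fun ω => Y ω + (X ω - Y ω)) = X := by
      funext ω
      ring
    have h := hsub Y (fun ω => X ω - Y ω) hYi (hXi.sub hYi) (by rw [e]; exact hXi)
    rw [e] at h
    have h2 := abs_spectralRisk_le_aux P m m₀ hnonneg hbdd (fun ω => X ω - Y ω)
      (hX.sub hY) (hXi.sub hYi)
    have h3 := le_abs_self (spectralRisk P m (fun ω => X ω - Y ω))
    linarith
  intro X Y hX hY hXi hYi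
  refine abs_sub_le_iff.2 ⟨key X Y hX hY hXi hYi, ?_⟩
  have h := key Y X hY hX hYi hXi
  simp_rw [abs_sub_comm (Y _) (X _)] at h
  exact h
end
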